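/- Let (X, →, *, 1) be an involutive BE algebra and define x⊙y = (x→y*)*. Then X satisfies the quantum-Wajsberg axiom (QW): x→((x∧y)∧(z∧x)) = (x→y)∧(x→z) for all x, y, z, if and only if X satisfies the quantum-MV axiom (Pqmv): x⊙((x*∨y)∨(z∨x*)) = (x⊙y)∨(x⊙z) for all x, y, z. (Hence quantum-Wajsberg algebras are definitionally equivalent to quantum-MV algebras.) -/

import Mathlib

/-- A bounded involutive BE algebra. -/
class InvBE (X : Type*) where
  imp : X → X → X
  one : X
  zero : X
  be1 : ∀ x : X, imp x x = one
  be2 : ∀ x : X, imp x one = one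
  be3 : ∀ x : X, imp one x = x
  be4 : ∀ x y z : X, imp x (imp y z) = imp y (imp x z)
  bound : ∀ x : X, imp zero x = one
  dn : ∀ x : X, imp (imp x zero) zero = x

namespace InvBE

variable {X : Type*} [InvBE X]

/-- Negation: `x* = x → 0`. -/
def neg (x : X) : X := imp x zero

/-- `x ∨ y = (x → y) → y`. -/
def sup (x y : X) : X := imp (imp x y) y

/-- `x ∧ y = ((x* → y*) → y*)*`. -/
def inf (x y : X) : X := neg (imp (imp (neg x) (neg y)) (neg y))

/-- `x ≤ y` iff `x → y = 1`. -/
def le (x y : X) : Prop := imp x y = one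

/-- `x ≤_Q y` iff `x = x ∧ y`. -/
def leQ (x y : X) : Prop := x = inf x y

end InvBE

namespace InvBE

variable {X : Type*} [InvBE X]

theorem neg_neg_eq (x : X) : neg (neg x) = x := dn x

theorem neg_sup_eq (x y : X) : neg (sup x y) = inf (neg x) (neg y) := by
  simp only [inf, sup, neg_neg_eq]

theorem neg_inf_eq (x y : X) : neg (inf x y) = sup (neg x) (neg y) := by
  simp only [inf, sup, neg_neg_eq]

end InvBE

open InvBE in
theorem stmt_18 {X : Type*} [InvBE X]
    (odot : X → X → X) (hodot : ∀ x y : X, odot x y = neg (imp x (neg y))) :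
    (∀ x y z : X, imp x (inf (inf x y) (inf z x)) = inf (imp x y) (imp x z)) ↔
    (∀ x y z : X,
      odot x (sup (sup (neg x) y) (sup z (neg x))) = sup (odot x y) (odot x z)) := by
  -- By De Morgan, (Pqmv) at `(x, y, z)` is the negation of (QW) at `(x, y*, z*)`.
  simp only [hodot, neg_sup_eq, neg_neg_eq]
  constructor
  · intro h x y z
    rw [h, neg_inf_eq]
  · intro h x y z
    have h' := congrArg neg (h x (neg y) (neg z))
    simpa only [neg_sup_eq, neg_neg_eq] using h'
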